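/- arXiv:2510.26179 — 4 statements merged into one kernel-verified Lean document; each statement's English description precedes it below -/
import Mathlib

section
/- Let q ≥ 1 be an integer, p = 2q+1, γ ∈ (0,1), and n ≥ 1. Let x₁,…,xₙ be nonzero real numbers and δ₁,…,δₙ real numbers such that for each i the quantity x̌_i := γ⁻¹(x_i + γδ_i) + p·1_{x_i<0} is an integer lying in {0,…,q} when x_i > 0 and in {q+1,…,p−1} when x_i < 0. If −q−1 < γ⁻ⁿ·∏_{i=1}^n (x_i + γδ_i) ≤ q, then Dcd_{γⁿ}( (∏_{i=1}^n x̌_i) mod p ) = ∏_{i=1}^n (x_i + γδ_i). -/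
open BigOperators

/-- Decoding (at sensitivity γⁿ) the residue mod p = 2q+1 of the product of the
encodings x̌ᵢ = γ⁻¹(xᵢ + γδᵢ) + p·1_{xᵢ<0} recovers ∏ (xᵢ + γδᵢ), provided
γ⁻ⁿ·∏ (xᵢ + γδᵢ) lies in (−q−1, q]. -/
theorem stmt_5 (q : ℤ) (hq : 1 ≤ q) (γ : ℝ) (hγ : 0 < γ ∧ γ < 1)
    (n : ℕ) (hn : 1 ≤ n) (x δ : Fin n → ℝ) (hx : ∀ i, x i ≠ 0)
    (xc : Fin n → ℤ)
    (hxc : ∀ i, (xc i : ℝ) =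
      γ⁻¹ * (x i + γ * δ i) + ((2 * q + 1 : ℤ) : ℝ) * (if x i < 0 then 1 else 0))
    (hpos : ∀ i, 0 < x i → 0 ≤ xc i ∧ xc i ≤ q)
    (hneg : ∀ i, x i < 0 → q < xc i ∧ xc i ≤ 2 * q)
    (hrange : -(q : ℝ) - 1 < (γ ^ n)⁻¹ * ∏ i, (x i + γ * δ i) ∧
              (γ ^ n)⁻¹ * ∏ i, (x i + γ * δ i) ≤ (q : ℝ)) :
    γ ^ n * ((((∏ i, xc i) % (2 * q + 1) : ℤ) : ℝ) -
      ((2 * q + 1 : ℤ) : ℝ) * (if q < (∏ i, xc i) % (2 * q + 1) then 1 else 0)) =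
      ∏ i, (x i + γ * δ i) := by
  classical
  obtain ⟨hγ0, -⟩ := hγ
  have hg : γ ≠ 0 := hγ0.ne'
  obtain ⟨y, hy⟩ : ∃ y : Fin n → ℤ,
      ∀ i, y i = xc i - (2 * q + 1) * (if x i < 0 then 1 else 0) := ⟨_, fun _ => rfl⟩
  have hyr : ∀ i, x i + γ * δ i = γ * (y i : ℝ) := by
    intro i
    have h := hxc i
    have h2 : (y i : ℝ) = γ⁻¹ * (x i + γ * δ i) := by
      rw [hy i]
      push_cast at h ⊢
      linarith
    rw [h2, mul_inv_cancel_left₀ hg]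
  have hprod : ∏ i, (x i + γ * δ i) = γ ^ n * ((∏ i, y i : ℤ) : ℝ) := by
    rw [Finset.prod_congr rfl (fun i _ => hyr i), Finset.prod_mul_distrib]
    simp
  have hmod : (∏ i, xc i) % (2 * q + 1) = (∏ i, y i) % (2 * q + 1) := by
    have : (∏ i, xc i) ≡ (∏ i, y i) [ZMOD (2 * q + 1)] := by
      apply Int.ModEq.prod
      intro i _
      rw [Int.modEq_iff_dvd, hy i]
      exact ⟨-(if x i < 0 then 1 else 0), by ring⟩
    exact this
  rw [hprod, inv_mul_cancel_left₀ (pow_ne_zero n hg)] at hrange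
  rw [hprod, hmod]
  generalize (∏ i, y i) = Y at *
  obtain ⟨h1, h2⟩ := hrange
  have h1' : -q - 1 < Y := by exact_mod_cast h1
  have h2' : Y ≤ q := by exact_mod_cast h2
  congr 1
  rcases le_or_gt 0 Y with h | h
  · rw [Int.emod_eq_of_lt h (by omega), if_neg (by omega)]
    simp
  · have : Y % (2 * q + 1) = Y + (2 * q + 1) := by
      rw [← Int.add_emod_right, Int.emod_eq_of_lt (by omega) (by omega)]
    rw [this, if_pos (by omega)]
    push_cast
    ring
end

section
/- Let p be a prime, g a unit of ℤ/pℤ, s ∈ ℕ, h = gˢ, n ≥ 1, and let m₁,…,mₙ be units of ℤ/pℤ with respective randomness values r₁,…,rₙ ∈ ℕ. Then decryption of the componentwise (Hadamard) product of the n ElGamal ciphertexts (g^{r_i}, m_i·h^{r_i}) equals the product ∏_{i=1}^n m_i in the unit group of ℤ/pℤ. -/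
open BigOperators

/-- Decryption of the Hadamard product of n ElGamal ciphertexts (g^{rᵢ}, mᵢ·h^{rᵢ})
equals the product ∏ mᵢ in the unit group of ℤ/pℤ. -/
theorem stmt_8 (p : ℕ) [Fact p.Prime] (g : (ZMod p)ˣ) (s : ℕ)
    (h : (ZMod p)ˣ) (hh : h = g ^ s) (n : ℕ) (hn : 1 ≤ n)
    (m : Fin n → (ZMod p)ˣ) (r : Fin n → ℕ) :
    ((∏ i, g ^ r i) ^ s)⁻¹ * ∏ i, (m i * h ^ r i) = ∏ i, m i := by
  have key : (∏ i, g ^ r i) ^ s = ∏ i, h ^ r i := by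
    rw [← Finset.prod_pow]
    refine Finset.prod_congr rfl fun i _ => ?_
    rw [hh, ← pow_mul, ← pow_mul, Nat.mul_comm]
  rw [key, Finset.prod_mul_distrib, mul_comm, mul_inv_cancel_right]
end

section
/- Let q be a prime, p = 2q+1 prime, g a unit of ℤ/pℤ, s ∈ ℕ, h = gˢ, γ ∈ (0,1), and n ≥ 1. Let x₁,…,xₙ be nonzero real numbers and δ₁,…,δₙ real numbers such that for each i the quantity x̌_i := γ⁻¹(x_i + γδ_i) + p·1_{x_i<0} is an integer lying in {1,…,q} when x_i > 0 and in {q+1,…,p−1} when x_i < 0, and the residue of x̌_i modulo p is a unit. If −q−1 < γ⁻ⁿ·∏_{i=1}^n (x_i + γδ_i) ≤ q, then for any randomness values r₁,…,rₙ ∈ ℕ, applying Dcd_{γⁿ} to the ElGamal decryption of the Hadamard product of the n ciphertexts (g^{r_i}, x̌_i·h^{r_i}) yields exactly ∏_{i=1}^n (x_i + γδ_i). -/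
open BigOperators

/-- ElGamal-based confidential multiplication: decoding (at sensitivity γⁿ) the ElGamal
decryption of the Hadamard product of the ciphertexts (g^{rᵢ}, x̌ᵢ·h^{rᵢ}) of the
encodings x̌ᵢ = γ⁻¹(xᵢ + γδᵢ) + p·1_{xᵢ<0} recovers exactly ∏ (xᵢ + γδᵢ), provided
γ⁻ⁿ·∏ (xᵢ + γδᵢ) ∈ (−q−1, q], where q is prime and p = 2q+1 is a (safe) prime. -/
theorem stmt_12 (q : ℕ) (hqp : q.Prime) (p : ℕ) [Fact p.Prime] (hp : p = 2 * q + 1)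
    (g : (ZMod p)ˣ) (s : ℕ) (h : (ZMod p)ˣ) (hh : h = g ^ s)
    (γ : ℝ) (hγ : 0 < γ ∧ γ < 1) (n : ℕ) (hn : 1 ≤ n)
    (x δ : Fin n → ℝ) (hx : ∀ i, x i ≠ 0)
    (xc : Fin n → ℤ)
    (hxc : ∀ i, (xc i : ℝ) = γ⁻¹ * (x i + γ * δ i) + (p : ℝ) * (if x i < 0 then 1 else 0))
    (hpos : ∀ i, 0 < x i → 1 ≤ xc i ∧ xc i ≤ (q : ℤ))
    (hneg : ∀ i, x i < 0 → (q : ℤ) < xc i ∧ xc i ≤ 2 * (q : ℤ))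
    (u : Fin n → (ZMod p)ˣ) (hu : ∀ i, (u i : ZMod p) = ((xc i : ℤ) : ZMod p))
    (hrange : -(q : ℝ) - 1 < (γ ^ n)⁻¹ * ∏ i, (x i + γ * δ i) ∧
              (γ ^ n)⁻¹ * ∏ i, (x i + γ * δ i) ≤ (q : ℝ))
    (r : Fin n → ℕ) :
    γ ^ n * (((((((∏ i, g ^ r i) ^ s)⁻¹ * ∏ i, (u i * h ^ r i) : (ZMod p)ˣ) :
        ZMod p).val : ℝ) -
      (p : ℝ) * (if q < ((((∏ i, g ^ r i) ^ s)⁻¹ * ∏ i, (u i * h ^ r i) : (ZMod p)ˣ) :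
        ZMod p).val then 1 else 0))) =
      ∏ i, (x i + γ * δ i) := by
  have hD : (((∏ i, g ^ r i) ^ s)⁻¹ * ∏ i, (u i * h ^ r i) : (ZMod p)ˣ) = ∏ i, u i := by
    have e : ∏ i, h ^ r i = (∏ i, g ^ r i) ^ s := by
      rw [← Finset.prod_pow]
      refine Finset.prod_congr rfl fun i _ => ?_
      rw [hh, ← pow_mul, ← pow_mul, mul_comm]
    rw [Finset.prod_mul_distrib, e, mul_comm, mul_assoc, mul_inv_cancel, mul_one]
  rw [hD]
  obtain ⟨hγ0, -⟩ := hγ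
  have hγn : γ ^ n ≠ 0 := (pow_pos hγ0 n).ne'
  let Y : ℤ := ∏ i, (xc i - (p : ℤ) * (if x i < 0 then 1 else 0))
  have hY : (Y : ℝ) = (γ ^ n)⁻¹ * ∏ i, (x i + γ * δ i) := by
    have e : ∀ i, ((xc i - (p : ℤ) * (if x i < 0 then 1 else 0) : ℤ) : ℝ)
        = γ⁻¹ * (x i + γ * δ i) := by
      intro i
      push_cast
      rw [hxc i]
      ring
    simp only [Y]
    rw [Int.cast_prod, Finset.prod_congr rfl (fun i _ => e i), Finset.prod_mul_distrib]
    simp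
  have hP : ∏ i, (x i + γ * δ i) = γ ^ n * (Y : ℝ) := by
    rw [hY, mul_inv_cancel_left₀ hγn]
  rw [← hY] at hrange
  have h1 : -(q : ℤ) - 1 < Y := by exact_mod_cast hrange.1
  have h2 : Y ≤ (q : ℤ) := by exact_mod_cast hrange.2
  have hU : ((∏ i, u i : (ZMod p)ˣ) : ZMod p) = ((Y : ℤ) : ZMod p) := by
    simp only [Y]
    rw [Units.coe_prod, Int.cast_prod]
    refine Finset.prod_congr rfl fun i _ => ?_
    rw [hu i]
    simp
  rw [hP, hU]
  congr 1
  have hv : (((Y : ZMod p)).val : ℤ) = Y % p := ZMod.val_intCast Y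
  generalize ((Y : ZMod p)).val = v at *
  by_cases h0 : 0 ≤ Y
  · have : Y % p = Y := Int.emod_eq_of_lt h0 (by omega)
    rw [this] at hv
    rw [if_neg (by omega), ← hv]
    simp
  · have : Y % p = Y + p := by
      rw [← Int.add_emod_right, Int.emod_eq_of_lt (by omega) (by omega)]
    rw [this] at hv
    rw [if_pos (by omega)]
    have : (v : ℝ) = Y + p := by exact_mod_cast hv
    rw [this]; ring
end

section
/- Let n, N ≥ 1, let W be an (nN)×n real matrix such that Ψ := WᵀW is invertible, let Γ ∈ ℝ^{nN}, and let F* := −ΓᵀW(WᵀW)⁻¹. Let q ≥ 1 be an integer, p = 2q+1, and γ ∈ (0,1). Suppose that −1 and every entry Γ_i, W_{il}, and (Φ_σ)_{l,m} (for all permutations σ of {1,…,n−1} and all indices) is an integer multiple of γ, and that for every triple (σ, i, l) and every column index m the scaled product γ⁻⁴·(−1)·Γ_i·W_{il}·(Φ_σ)_{l,m} lies in (−q−1, q]. For a real number y = γz with z ∈ ℤ and −q−1 < z ≤ q, write Ecd_γ(y) := (z mod p) ∈ {0,…,p−1}. Then summing, over all permutations σ of {1,…,n−1}, all i ∈ {1,…,nN},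 all l ∈ {1,…,n}, and each column index m ∈ {1,…,n}, the values Dcd_{γ⁴}( (Ecd_γ(−1)·Ecd_γ(Γ_i)·Ecd_γ(W_{il})·Ecd_γ((Φ_σ)_{l,m})) mod p ) recovers exactly the m-th entry of F*; that is, the confidential FRIT computation over encoded residues equals F* when all quantization errors are zero. -/
open Matrix BigOperators

lemma decode_aux (q z a b c d : ℤ) (hq : 1 ≤ q) (hz : z = a * b * c * d)
    (h1 : -q - 1 < z) (h2 : z ≤ q) :
    ((((a % (2 * q + 1)) * (b % (2 * q + 1)) * (c % (2 * q + 1)) *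
              (d % (2 * q + 1))) % (2 * q + 1) : ℤ) : ℝ) -
          ((2 * q + 1 : ℤ) : ℝ) *
            (if q < ((a % (2 * q + 1)) * (b % (2 * q + 1)) * (c % (2 * q + 1)) *
              (d % (2 * q + 1))) % (2 * q + 1) then 1 else 0) = (z : ℝ) := by
  have e : ((a % (2 * q + 1)) * (b % (2 * q + 1)) * (c % (2 * q + 1)) *
              (d % (2 * q + 1))) % (2 * q + 1) = z % (2 * q + 1) := by
    rw [hz]
    exact (((Int.mod_modEq a _).mul (Int.mod_modEq b _)).mul (Int.mod_modEq c _)).mul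
      (Int.mod_modEq d _)
  rw [e]
  rcases le_or_gt 0 z with h | h
  · rw [Int.emod_eq_of_lt h (by omega), if_neg (by omega)]
    simp
  · have : z % (2 * q + 1) = z + (2 * q + 1) := by
      rw [← Int.add_emod_right, Int.emod_eq_of_lt (by omega) (by omega)]
    rw [this, if_pos (by omega)]
    push_cast
    ring

lemma inv_aux (n : ℕ) (A : Matrix (Fin (n + 1)) (Fin (n + 1)) ℝ) (j i : Fin (n + 1)) :
    ∑ σ : Equiv.Perm (Fin n), (A.det)⁻¹ * (-1 : ℝ) ^ ((i : ℕ) + (j : ℕ)) *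
      ((Equiv.Perm.sign σ : ℤ) : ℝ) *
        ∏ l : Fin n, A.submatrix i.succAbove j.succAbove l (σ l) = A⁻¹ j i := by
  rw [Matrix.inv_def, Matrix.smul_apply, Matrix.adjugate_fin_succ_eq_det_submatrix,
    ← Matrix.det_transpose (A.submatrix _ _), Matrix.det_apply' (A.submatrix _ _)ᵀ, smul_eq_mul,
    Ring.inverse_eq_inv', ← mul_assoc, Finset.mul_sum]
  refine Finset.sum_congr rfl fun σ _ => ?_
  simp only [Matrix.transpose_apply]
  ring

/-- Confidential FRIT correctness with zero quantization error: if −1 and all entries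
Γᵢ, W_{il}, (Φ_σ)_{l,m} are exact integer multiples of γ (with encodings in the valid
range (−q−1, q]), and each scaled product γ⁻⁴·(−1)·Γᵢ·W_{il}·(Φ_σ)_{l,m} lies in
(−q−1, q], then summing the decoded residues Dcd_{γ⁴}((Ecd_γ(−1)·Ecd_γ(Γᵢ)·Ecd_γ(W_{il})·
Ecd_γ((Φ_σ)_{l,m})) mod p) over σ, i, l recovers exactly the m-th entry of
F* = −ΓᵀW(WᵀW)⁻¹, where p = 2q+1 and Ecd_γ(γz) = z mod p. -/
theorem stmt_13 (n N : ℕ)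
    (W : Matrix (Fin ((n + 1) * (N + 1))) (Fin (n + 1)) ℝ)
    (Γ : Matrix (Fin ((n + 1) * (N + 1))) (Fin 1) ℝ)
    (hΨ : IsUnit (Wᵀ * W).det)
    (Φ : Equiv.Perm (Fin n) → Matrix (Fin (n + 1)) (Fin (n + 1)) ℝ)
    (hΦ : ∀ σ j i, Φ σ j i =
      ((Wᵀ * W).det)⁻¹ * (-1 : ℝ) ^ ((i : ℕ) + (j : ℕ)) * ((Equiv.Perm.sign σ : ℤ) : ℝ) *
        ∏ l : Fin n, (Wᵀ * W).submatrix i.succAbove j.succAbove l (σ l))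
    (q : ℤ) (hq : 1 ≤ q) (γ : ℝ) (hγ : 0 < γ ∧ γ < 1)
    (zneg : ℤ) (hzneg : γ * (zneg : ℝ) = -1) (hznegr : -q - 1 < zneg ∧ zneg ≤ q)
    (zΓ : Fin ((n + 1) * (N + 1)) → ℤ) (hzΓ : ∀ i, γ * (zΓ i : ℝ) = Γ i 0)
    (hzΓr : ∀ i, -q - 1 < zΓ i ∧ zΓ i ≤ q)
    (zW : Fin ((n + 1) * (N + 1)) → Fin (n + 1) → ℤ)
    (hzW : ∀ i l, γ * (zW i l : ℝ) = W i l)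
    (hzWr : ∀ i l, -q - 1 < zW i l ∧ zW i l ≤ q)
    (zΦ : Equiv.Perm (Fin n) → Fin (n + 1) → Fin (n + 1) → ℤ)
    (hzΦ : ∀ σ l c, γ * (zΦ σ l c : ℝ) = Φ σ l c)
    (hzΦr : ∀ σ l c, -q - 1 < zΦ σ l c ∧ zΦ σ l c ≤ q)
    (hprod : ∀ (σ : Equiv.Perm (Fin n)) i l c,
        -(q : ℝ) - 1 < (γ ^ 4)⁻¹ * ((-1) * Γ i 0 * W i l * Φ σ l c) ∧
        (γ ^ 4)⁻¹ * ((-1) * Γ i 0 * W i l * Φ σ l c) ≤ (q : ℝ)) :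
    ∀ c : Fin (n + 1),
      (∑ σ : Equiv.Perm (Fin n), ∑ i, ∑ l,
        γ ^ 4 * (((((zneg % (2 * q + 1)) * (zΓ i % (2 * q + 1)) * (zW i l % (2 * q + 1)) *
              (zΦ σ l c % (2 * q + 1))) % (2 * q + 1) : ℤ) : ℝ) -
          ((2 * q + 1 : ℤ) : ℝ) *
            (if q < ((zneg % (2 * q + 1)) * (zΓ i % (2 * q + 1)) * (zW i l % (2 * q + 1)) *
              (zΦ σ l c % (2 * q + 1))) % (2 * q + 1) then 1 else 0))) =
      (-(Γᵀ * W * (Wᵀ * W)⁻¹)) 0 c := by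
  intro c
  have hγ0 : γ ≠ 0 := hγ.1.ne'
  have key : ∀ σ i l, (-1) * Γ i 0 * W i l * Φ σ l c =
      γ ^ 4 * ((zneg * zΓ i * zW i l * zΦ σ l c : ℤ) : ℝ) := by
    intro σ i l
    rw [← hzΓ, ← hzW, ← hzΦ, ← hzneg]
    push_cast
    ring
  have step : ∀ σ i l,
      γ ^ 4 * (((((zneg % (2 * q + 1)) * (zΓ i % (2 * q + 1)) * (zW i l % (2 * q + 1)) *
              (zΦ σ l c % (2 * q + 1))) % (2 * q + 1) : ℤ) : ℝ) -
          ((2 * q + 1 : ℤ) : ℝ) *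
            (if q < ((zneg % (2 * q + 1)) * (zΓ i % (2 * q + 1)) * (zW i l % (2 * q + 1)) *
              (zΦ σ l c % (2 * q + 1))) % (2 * q + 1) then 1 else 0)) =
      (-1) * Γ i 0 * W i l * Φ σ l c := by
    intro σ i l
    have h := hprod σ i l c
    rw [key, inv_mul_cancel_left₀ (pow_ne_zero 4 hγ0)] at h
    rw [key, decode_aux q _ _ _ _ _ hq rfl (by exact_mod_cast h.1) (by exact_mod_cast h.2)]
  simp only [step]
  have hinv : ∀ l, ∑ σ, Φ σ l c = (Wᵀ * W)⁻¹ l c := by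
    intro l
    rw [← inv_aux]
    exact Finset.sum_congr rfl fun σ _ => hΦ σ l c
  have hR : (-(Γᵀ * W * (Wᵀ * W)⁻¹)) 0 c =
      ∑ i, ∑ l, ∑ σ, (-1) * Γ i 0 * W i l * Φ σ l c := by
    simp only [← Finset.mul_sum, hinv]
    rw [Matrix.mul_assoc, Matrix.neg_apply, Matrix.mul_apply, ← Finset.sum_neg_distrib]
    refine Finset.sum_congr rfl fun i _ => ?_
    rw [Matrix.mul_apply (M := W), Matrix.transpose_apply, Finset.mul_sum,
      ← Finset.sum_neg_distrib]
    refine Finset.sum_congr rfl fun l _ => ?_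
    ring
  rw [hR, Finset.sum_comm]
  exact Finset.sum_congr rfl fun i _ => Finset.sum_comm
end
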